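/- Let A be a Hopf *-algebra over ℂ, α : A → A an admissible bijection with α-twisted antipode S_α = S∘α, and η : A → D an α-real nondegenerate cocycle for a *-representation π on a complex inner product space D. Then for every a ∈ A, if η(a) = 0 then η((S_α(a))*) = 0 and η(S_α(a*)) = 0; consequently the formulas T(η(a)) = η((S_α(a))*) and T'(η(a)) = η(S_α(a*)) give well-defined conjugate-linear involutive maps on η(A), and they are mutually adjoint: ⟨T(η(a)), T'(η(b))⟩ = ⟨η(b), η(a)⟩ for all a, b ∈ A. -/

import Mathlib

/-!
On the level of `A` itself, put `T a = (S_α a)*` and `T' a = S_α (a*)`. Reality of `η` says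
`⟨η (T a), η (T' b)⟩ = ⟨η b, η a⟩`, which is the adjointness claim. If `T` and `T'` are involutions
of `A`, in particular surjective, then `η a = 0` makes `η (T a)` orthogonal to all of `η(A)`,
hence to itself, and likewise for `T'`; so both maps descend to `η(A)`.

Involutivity is a computation with `*` once `S` and `α` commute: `α * α * = id` rewrites
`S α * α S *` as `S * S * = id`. That `S` and `α` commute (`antipode_comm`) holds because `α` is a
bialgebra map, so `S ∘ α` and `α ∘ S` are a left and a right convolution inverse of `α`.
Compatibility of `α` with the counit, needed for this, follows from compatibility with `Δ` and
injectivity (`counit_map`).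
-/

open scoped TensorProduct ComplexConjugate ComplexOrder InnerProductSpace
open Coalgebra

universe u

variable {A : Type u} [Ring A] [HopfAlgebra ℂ A] [StarRing A] [StarModule ℂ A]

/-- The star-compatibility axioms making a Hopf algebra over `ℂ` into a Hopf `*`-algebra:
`Δ(a*) = (*⊗*)(Δ a)` (expressed in Sweedler form), `ε(a*) = conj (ε a)`,
and `S(S(a*)*) = a`.  (The properties `(ab)* = b*a*`, `1* = 1`, involutivity and
conjugate-linearity of `*` are encoded by `StarRing A` and `StarModule ℂ A`.) -/
def IsHopfStar (A : Type u) [Ring A] [HopfAlgebra ℂ A] [StarRing A] [StarModule ℂ A] : Prop :=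
  (∀ (a : A) (ι : Type u) (s : Finset ι) (x y : ι → A),
      comul (R := ℂ) a = ∑ i ∈ s, x i ⊗ₜ[ℂ] y i →
      comul (R := ℂ) (star a) = ∑ i ∈ s, star (x i) ⊗ₜ[ℂ] star (y i)) ∧
  (∀ a : A, counit (R := ℂ) (star a) = conj (counit (R := ℂ) a)) ∧
  (∀ a : A, HopfAlgebra.antipode (R := ℂ)
      (star (HopfAlgebra.antipode (R := ℂ) (star a))) = a)

/-- `α : A → A` is an admissible bijection: (i) a unital algebra homomorphism
(`ℂ`-linearity is part of the data `α : A →ₗ[ℂ] A`); (ii) `α((α(a*))*) = a`;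
(iii) `(α⊗α)∘Δ = Δ∘α`; (iv) `id + α` is bijective; (v) `id⊗id + α⊗α` is bijective. -/
structure IsAdmissible (α : A →ₗ[ℂ] A) : Prop where
  map_one : α 1 = 1
  map_mul : ∀ a b : A, α (a * b) = α a * α b
  star_cond : ∀ a : A, α (star (α (star a))) = a
  comul_comp : ∀ a : A,
    TensorProduct.map α α (comul (R := ℂ) a) = comul (R := ℂ) (α a)
  bij_add : Function.Bijective ((LinearMap.id + α : A →ₗ[ℂ] A))
  bij_tensor :
    Function.Bijective ((LinearMap.id + TensorProduct.map α α : A ⊗[ℂ] A →ₗ[ℂ] A ⊗[ℂ] A))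

/-- The `α`-twisted antipode `S_α = S ∘ α`. -/
def twistedAntipode (α : A →ₗ[ℂ] A) : A →ₗ[ℂ] A :=
  HopfAlgebra.antipode (R := ℂ) ∘ₗ α

variable {D : Type u} [NormedAddCommGroup D] [InnerProductSpace ℂ D]

/-- A `*`-representation of `A` on the complex inner product space `D`:
a unital algebra homomorphism into the linear endomorphisms of `D` such that
`⟨π(a*)ξ, ζ⟩ = ⟨ξ, π(a)ζ⟩`. -/
def IsStarRep (π : A →ₐ[ℂ] Module.End ℂ D) : Prop :=
  ∀ (a : A) (ξ ζ : D), ⟪π (star a) ξ, ζ⟫_ℂ = ⟪ξ, π a ζ⟫_ℂ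

/-- A cocycle for the representation `π`: `η(ab) = π(a)η(b) + ε(b)·η(a)`. -/
def IsCocycle (π : A →ₐ[ℂ] Module.End ℂ D) (η : A →ₗ[ℂ] D) : Prop :=
  ∀ a b : A, η (a * b) = π a (η b) + counit (R := ℂ) b • η a

/-- A generating functional on `A`: a linear functional with `L(1) = 0`,
`L(a*) = conj (L a)`, and `L(a*a)` a nonnegative real for `a ∈ ker ε`. -/
structure IsGenFunctional (L : A →ₗ[ℂ] ℂ) : Prop where
  map_one : L 1 = 0
  hermitian : ∀ a : A, L (star a) = conj (L a)
  cond_pos : ∀ a : A, counit (R := ℂ) a = 0 → 0 ≤ L (star a * a)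

/-- `η` yields the coboundary of `L`:
`L(ab) = ε(a)L(b) + L(a)ε(b) + ⟨η(a*), η(b)⟩`. -/
def YieldsCoboundary (η : A →ₗ[ℂ] D) (L : A →ₗ[ℂ] ℂ) : Prop :=
  ∀ a b : A, L (a * b) =
    counit (R := ℂ) a * L b + L a * counit (R := ℂ) b + ⟪η (star a), η b⟫_ℂ

/-- `η` is `α`-real: `⟨η(a), η(b)⟩ = ⟨η((S_α b)*), η(S_α(a*))⟩`. -/
def IsAlphaReal (α : A →ₗ[ℂ] A) (η : A →ₗ[ℂ] D) : Prop :=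
  ∀ a b : A, ⟪η a, η b⟫_ℂ =
    ⟪η (star (twistedAntipode α b)), η (twistedAntipode α (star a))⟫_ℂ

namespace IsAdmissible

variable {α : A →ₗ[ℂ] A}

lemma injective (hα : IsAdmissible α) : Function.Injective α := by
  have hinv : Function.Involutive fun a : A => α (star a) := hα.star_cond
  intro a b h
  have h' : star a = star b := hinv.injective (by simpa using h)
  exact star_injective h'

/-- The star involution conjugates `α` to its inverse. -/
lemma map_star_map (hα : IsAdmissible α) (a : A) : α (star (α a)) = star a := by
  simpa using hα.star_cond (star a)

/-- The image under `α` of a Sweedler decomposition of `a`, as a decomposition of `α a`. -/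
noncomputable def mapRepr (hα : IsAdmissible α) {a : A} {ι : Type*} (r : Coalgebra.Repr ℂ a ι) :
    Coalgebra.Repr ℂ (α a) ι where
  index := r.index
  left := fun i => α (r.left i)
  right := fun i => α (r.right i)
  eq := by rw [← hα.comul_comp, ← r.eq]; simp

/-- `ε ∘ α` is again a left counit for `Δ`, because `α` is injective and respects `Δ`; hence it
agrees with `ε`. -/
lemma counit_map (hα : IsAdmissible α) (a : A) :
    counit (R := ℂ) (α a) = counit (R := ℂ) a := by
  have h1 := Coalgebra.sum_counit_smul (hα.mapRepr (ℛ ℂ a))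
  have h2 : ∑ i ∈ (ℛ ℂ a).index,
      counit (R := ℂ) (α ((ℛ ℂ a).left i)) • (ℛ ℂ a).right i = a := by
    apply hα.injective
    simpa [mapRepr] using h1
  have h3 : ∑ i ∈ (ℛ ℂ a).index,
      counit (R := ℂ) ((ℛ ℂ a).right i) • (ℛ ℂ a).left i = a := by
    have h := congrArg (TensorProduct.rid ℂ A) (Coalgebra.sum_tmul_counit_eq (ℛ ℂ a))
    simpa only [map_sum, TensorProduct.rid_tmul, one_smul] using h
  -- Both sides equal `∑ ε(α a₁) ε(a₂)`.
  conv_rhs => rw [← h2]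
  conv_lhs => rw [← h3]
  simp [mul_comm]

/-- An admissible bijection commutes with the antipode: `S ∘ α` is a left and `α ∘ S` a right
convolution inverse of `α`. -/
lemma antipode_comm (hα : IsAdmissible α) (a : A) :
    HopfAlgebra.antipode (R := ℂ) (α a) = α (HopfAlgebra.antipode (R := ℂ) a) := by
  have hL : WithConv.toConv (HopfAlgebra.antipode (R := ℂ) ∘ₗ α) * WithConv.toConv α = 1 := by
    ext c
    rw [(ℛ ℂ c).convMul_apply]
    simpa [mapRepr, hα.counit_map] using
      HopfAlgebra.sum_antipode_mul_eq_algebraMap_counit (hα.mapRepr (ℛ ℂ c))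
  have hR : WithConv.toConv α * WithConv.toConv (α ∘ₗ HopfAlgebra.antipode (R := ℂ)) = 1 := by
    ext c
    rw [(ℛ ℂ c).convMul_apply]
    have h := congrArg α (HopfAlgebra.sum_mul_antipode_eq_algebraMap_counit (ℛ ℂ c))
    simpa [hα.map_mul, hα.map_one, Algebra.algebraMap_eq_smul_one] using h
  exact LinearMap.congr_fun (WithConv.toConv_injective (left_inv_eq_right_inv hL hR)) a

/-- The map `a ↦ S_α (a*)` is an involution of `A`. -/
lemma twistedAntipode_star_involutive (hα : IsAdmissible α) (hA : IsHopfStar A) (a : A) :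
    twistedAntipode α (star (twistedAntipode α (star a))) = a := by
  simp only [twistedAntipode, LinearMap.comp_apply]
  rw [hα.antipode_comm (star a), hα.map_star_map, hA.2.2]

/-- The map `a ↦ (S_α a)*` is an involution of `A`. -/
lemma star_twistedAntipode_involutive (hα : IsAdmissible α) (hA : IsHopfStar A) (a : A) :
    star (twistedAntipode α (star (twistedAntipode α a))) = a := by
  have h := hα.twistedAntipode_star_involutive hA (star a)
  rw [star_star] at h
  rw [h, star_star]

end IsAdmissible

/-- For an `α`-real nondegenerate cocycle `η`, the maps `T(η(a)) = η((S_α(a))*)` and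
`T'(η(a)) = η(S_α(a*))` are well defined, conjugate-linear and involutive on `η(A)`,
and mutually adjoint: `⟨T(η(a)), T'(η(b))⟩ = ⟨η(b), η(a)⟩`. -/
theorem alphaReal_cocycle_conjugations (hA : IsHopfStar A)
    (α : A →ₗ[ℂ] A) (hα : IsAdmissible α)
    (π : A →ₐ[ℂ] Module.End ℂ D) (η : A →ₗ[ℂ] D)
    (hπ : IsStarRep π) (hη : IsCocycle π η)
    (hnd : Dense (Set.range η)) (hreal : IsAlphaReal α η) :
    (∀ a : A, η a = 0 →
      η (star (twistedAntipode α a)) = 0 ∧ η (twistedAntipode α (star a)) = 0) ∧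
    (∀ (c : ℂ) (a : A), η (star (twistedAntipode α (c • a))) =
      conj c • η (star (twistedAntipode α a))) ∧
    (∀ (c : ℂ) (a : A), η (twistedAntipode α (star (c • a))) =
      conj c • η (twistedAntipode α (star a))) ∧
    (∀ a : A, η (star (twistedAntipode α (star (twistedAntipode α a)))) = η a) ∧
    (∀ a : A, η (twistedAntipode α (star (twistedAntipode α (star a)))) = η a) ∧
    (∀ a b : A, ⟪η (star (twistedAntipode α a)),
        η (twistedAntipode α (star b))⟫_ℂ = ⟪η b, η a⟫_ℂ) := by
  have hT := hα.star_twistedAntipode_involutive hA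
  have hT' := hα.twistedAntipode_star_involutive hA
  refine ⟨fun a ha => ⟨?_, ?_⟩, ?_, ?_, fun a => by rw [hT], fun a => by rw [hT'],
    fun a b => (hreal b a).symm⟩
  · -- Reality pairs `η (T a)` with `η (T' b)`; `b = T' (T a)` makes the second vector `η (T a)` too.
    have h := hreal (twistedAntipode α (star (star (twistedAntipode α a)))) a
    rw [hT', ha, inner_zero_right] at h
    exact inner_self_eq_zero.mp h.symm
  · have h := hreal a (star (twistedAntipode α (twistedAntipode α (star a))))
    rw [hT, ha, inner_zero_left] at h
    exact inner_self_eq_zero.mp h.symm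
  · intro c a
    simp [star_smul]
  · intro c a
    simp [star_smul]
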